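/- With the notation of the concrete construction (Ω = ZMod 8 × ZMod k × ZMod r with k odd and r ∈ {1,3}, and R₁ = ⟨τ₁,ρ₁,ρ₂⟩, R₂ = ⟨τ₂,ρ₁,ρ₂⟩, G = ⟨R₁,R₂⟩ ≤ Sym(Ω)): there is no g ∈ G such that g⁻¹ R₂ g = R₁. -/

import Mathlib

open Equiv

instance : DecidablePred (Even : ZMod 8 → Prop) := fun i =>
  decidable_of_iff (∃ x : ZMod 8, i = x + x) Iff.rfl

/-- The permutation of `ZMod 8` given by the 8-cycle (0 1 2 3 4 5 6 7). -/
def sigma1 : Equiv.Perm (ZMod 8) := Equiv.addRight (1 : ZMod 8)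

/-- The permutation of `ZMod 8` given by the 8-cycle (0 1 6 7 4 5 2 3). -/
def sigma2 : Equiv.Perm (ZMod 8) where
  toFun i := if Even i then i + 1 else i + 5
  invFun i := if Even i then i + 3 else i - 1
  left_inv := by decide
  right_inv := by decide

def tau1 (k r : ℕ) : Equiv.Perm (ZMod 8 × ZMod k × ZMod r) :=
  sigma1.prodCongr (Equiv.refl _)

def tau2 (k r : ℕ) : Equiv.Perm (ZMod 8 × ZMod k × ZMod r) :=
  sigma2.prodCongr (Equiv.refl _)

def rho1 (k r : ℕ) : Equiv.Perm (ZMod 8 × ZMod k × ZMod r) where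
  toFun x := if Even x.1 then (x.1, x.2.1 + 1, x.2.2) else (x.1, x.2.1 - 1, x.2.2)
  invFun x := if Even x.1 then (x.1, x.2.1 - 1, x.2.2) else (x.1, x.2.1 + 1, x.2.2)
  left_inv := by rintro ⟨i, j, l⟩; by_cases h : Even i <;> simp [h]
  right_inv := by rintro ⟨i, j, l⟩; by_cases h : Even i <;> simp [h]

def rho2 (k r : ℕ) : Equiv.Perm (ZMod 8 × ZMod k × ZMod r) where
  toFun x := if Even x.1 then (x.1, x.2.1, x.2.2 + 1) else (x.1, x.2.1, x.2.2 - 1)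
  invFun x := if Even x.1 then (x.1, x.2.1, x.2.2 - 1) else (x.1, x.2.1, x.2.2 + 1)
  left_inv := by rintro ⟨i, j, l⟩; by_cases h : Even i <;> simp [h]
  right_inv := by rintro ⟨i, j, l⟩; by_cases h : Even i <;> simp [h]

/-- The permutation of `ZMod 8 × ZMod k × ZMod r` acting on the first coordinate as the
product of transpositions (1 5)(3 7) and fixing the other coordinates. -/
def hperm (k r : ℕ) : Equiv.Perm (ZMod 8 × ZMod k × ZMod r) :=
  ((Equiv.swap (1 : ZMod 8) 5).trans (Equiv.swap (3 : ZMod 8) 7)).prodCongr (Equiv.refl _)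

def R1 (k r : ℕ) : Subgroup (Equiv.Perm (ZMod 8 × ZMod k × ZMod r)) :=
  Subgroup.closure {tau1 k r, rho1 k r, rho2 k r}

def R2 (k r : ℕ) : Subgroup (Equiv.Perm (ZMod 8 × ZMod k × ZMod r)) :=
  Subgroup.closure {tau2 k r, rho1 k r, rho2 k r}

def Ggrp (k r : ℕ) : Subgroup (Equiv.Perm (ZMod 8 × ZMod k × ZMod r)) :=
  R1 k r ⊔ R2 k r

def Hgrp (k r : ℕ) : Subgroup (Equiv.Perm (ZMod 8 × ZMod k × ZMod r)) :=
  Subgroup.closure {tau1 k r, tau2 k r}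

/-! Every element of `G` permutes the fibres of the projection to `ZMod 8`, and `R₁`, `R₂` act there
as `⟨σ₁⟩`, `⟨σ₂⟩`. Since `σ₂ σ₁ σ₂⁻¹ = σ₁ ^ 5`, the group `⟨σ₁⟩` is normal in `⟨σ₁, σ₂⟩`, so
conjugating `R₂` into `R₁` by an element of `G` would force `σ₂ ∈ ⟨σ₁⟩`; but `σ₂` does not even
commute with `σ₁`. -/

section PermsOver

variable {X A : Type*}

/-- The permutations of `X` that permute the fibres of `f : X → A` as some element of `S` permutes
`A`. When `f` is not surjective, that element of `S` need not be unique. -/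
def permsOver (f : X → A) (S : Subgroup (Perm A)) : Subgroup (Perm X) where
  carrier := {g | ∃ e ∈ S, Function.Semiconj f g e}
  one_mem' := ⟨1, S.one_mem, Function.Semiconj.id_right⟩
  mul_mem' := fun ⟨e, he, hg⟩ ⟨e', he', hh⟩ => ⟨e * e', S.mul_mem he he', hg.comp_right hh⟩
  inv_mem' := fun {g} ⟨e, he, hg⟩ =>
    ⟨e⁻¹, S.inv_mem he, hg.inverses_right g.right_inv e.left_inv⟩

variable {f : X → A} {S : Subgroup (Perm A)} {g h : Perm X}

theorem mem_permsOver_iff_of_semiconj (hf : Function.Surjective f) {e : Perm A}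
    (hg : Function.Semiconj f g e) : g ∈ permsOver f S ↔ e ∈ S := by
  refine ⟨fun ⟨e', he', hg'⟩ => ?_, fun he => ⟨e, he, hg⟩⟩
  have : e = e' := Equiv.ext <| hf.forall.2 fun x => (hg x).symm.trans (hg' x)
  rwa [this]

theorem conj_mem_permsOver (hg : g ∈ permsOver f (Subgroup.normalizer S))
    (hh : h ∈ permsOver f S) : g * h * g⁻¹ ∈ permsOver f S := by
  obtain ⟨e, he, hge⟩ := hg
  obtain ⟨d, hd, hhd⟩ := hh
  exact ⟨e * d * e⁻¹, (Subgroup.mem_normalizer_iff.1 he d).1 hd,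
    (hge.comp_right hhd).comp_right (hge.inverses_right g.right_inv e.left_inv)⟩

end PermsOver

theorem sigma2_mul_sigma1_mul_inv : sigma2 * sigma1 * sigma2⁻¹ = sigma1 ^ 5 := by
  decide

theorem not_commute_sigma1_sigma2 : ¬ Commute sigma1 sigma2 := by
  unfold Commute SemiconjBy
  decide

theorem sigma2_mem_normalizer_zpowers_sigma1 :
    sigma2 ∈ Subgroup.normalizer (Subgroup.zpowers sigma1 : Set (Perm (ZMod 8))) := by
  refine Subgroup.mem_normalizer_fintype ?_
  rintro _ ⟨n, rfl⟩
  rw [← conj_zpow, sigma2_mul_sigma1_mul_inv]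
  exact Subgroup.zpow_mem _ (Subgroup.npow_mem_zpowers sigma1 5) n

theorem sigma2_notMem_zpowers_sigma1 : sigma2 ∉ Subgroup.zpowers sigma1 := by
  rintro ⟨n, hn⟩
  exact not_commute_sigma1_sigma2 (hn ▸ (Commute.refl sigma1).zpow_right n)

section Projection

variable (k r : ℕ)

theorem semiconj_fst_tau1 : Function.Semiconj Prod.fst (tau1 k r) sigma1 := fun _ => rfl

theorem semiconj_fst_tau2 : Function.Semiconj Prod.fst (tau2 k r) sigma2 := fun _ => rfl

theorem semiconj_fst_rho1 : Function.Semiconj Prod.fst (rho1 k r) (1 : Perm (ZMod 8)) :=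
  fun _ => (apply_ite Prod.fst _ _ _).trans (ite_self _)

theorem semiconj_fst_rho2 : Function.Semiconj Prod.fst (rho2 k r) (1 : Perm (ZMod 8)) :=
  fun _ => (apply_ite Prod.fst _ _ _).trans (ite_self _)

variable {S : Subgroup (Perm (ZMod 8))}

theorem R1_le_permsOver_fst (hS : sigma1 ∈ S) : R1 k r ≤ permsOver Prod.fst S := by
  refine (Subgroup.closure_le _).2 ?_
  rintro _ (rfl | rfl | rfl)
  · exact ⟨sigma1, hS, semiconj_fst_tau1 k r⟩
  · exact ⟨1, S.one_mem, semiconj_fst_rho1 k r⟩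
  · exact ⟨1, S.one_mem, semiconj_fst_rho2 k r⟩

theorem R2_le_permsOver_fst (hS : sigma2 ∈ S) : R2 k r ≤ permsOver Prod.fst S := by
  refine (Subgroup.closure_le _).2 ?_
  rintro _ (rfl | rfl | rfl)
  · exact ⟨sigma2, hS, semiconj_fst_tau2 k r⟩
  · exact ⟨1, S.one_mem, semiconj_fst_rho1 k r⟩
  · exact ⟨1, S.one_mem, semiconj_fst_rho2 k r⟩

theorem Ggrp_le_permsOver_fst_normalizer :
    Ggrp k r ≤ permsOver Prod.fst (Subgroup.normalizer (Subgroup.zpowers sigma1)) :=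
  sup_le (R1_le_permsOver_fst k r (Subgroup.le_normalizer (Subgroup.mem_zpowers sigma1)))
    (R2_le_permsOver_fst k r sigma2_mem_normalizer_zpowers_sigma1)

theorem tau2_notMem_permsOver_fst_zpowers :
    tau2 k r ∉ permsOver Prod.fst (Subgroup.zpowers sigma1) := by
  rw [mem_permsOver_iff_of_semiconj Prod.fst_surjective (semiconj_fst_tau2 k r)]
  exact sigma2_notMem_zpowers_sigma1

end Projection

theorem R2_not_conjugate_to_R1_general (k r : ℕ) :
    ¬ ∃ g ∈ Ggrp k r, Subgroup.map (MulAut.conj g⁻¹).toMonoidHom (R2 k r) ≤ R1 k r := by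
  rintro ⟨g, hg, hmap⟩
  have hconj : g⁻¹ * tau2 k r * g ∈ R1 k r :=
    hmap ⟨tau2 k r, Subgroup.subset_closure (Set.mem_insert _ _), by simp⟩
  have htau2 : g * (g⁻¹ * tau2 k r * g) * g⁻¹ ∈ permsOver Prod.fst (Subgroup.zpowers sigma1) :=
    conj_mem_permsOver (Ggrp_le_permsOver_fst_normalizer k r hg)
      (R1_le_permsOver_fst k r (Subgroup.mem_zpowers sigma1) hconj)
  rw [mul_assoc g⁻¹, mul_inv_cancel_left, mul_inv_cancel_right] at htau2
  exact tau2_notMem_permsOver_fst_zpowers k r htau2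

/-- There is no `g ∈ G` with `g⁻¹ R₂ g = R₁`. -/
theorem R2_not_conjugate_to_R1 (k r : ℕ) (hk0 : 0 < k) (hk : Odd k) (hr : r = 1 ∨ r = 3) :
    ¬ ∃ g ∈ Ggrp k r,
        Subgroup.map (MulAut.conj g⁻¹).toMonoidHom (R2 k r) = R1 k r := by
  rintro ⟨g, hg, hmap⟩
  exact R2_not_conjugate_to_R1_general k r ⟨g, hg, hmap.le⟩
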